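/- arXiv:2007.08914 — 5 statements merged into one kernel-verified Lean document; each statement's English description precedes it below -/
import Mathlib

section
/- Let G = (V, E) be a finite directed acyclic graph with n vertices and let ℓ be an integer with 1 ≤ ℓ ≤ n. Then the vertex set V can be partitioned into pairwise disjoint sets P_1, …, P_a, Q_1, …, Q_b whose union is V, where each P_i is a chain of G, each Q_j is an antichain of G, a ≤ ℓ, and b ≤ 2·⌈n/ℓ⌉. -/
/-- A chain of the DAG `(V, E)`: a set of vertices that is traced out by a
directed path (a duplicate-free list whose consecutive elements are joined by edges). -/
def IsDagChain {V : Type*} (E : V → V → Prop) (S : Set V) : Prop :=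
  ∃ l : List V, l.Nodup ∧ l.Chain' E ∧ {x | x ∈ l} = S

/-- An antichain of the DAG `(V, E)`: a set of vertices with no edge between any two of them. -/
def IsDagAntichain {V : Type*} (E : V → V → Prop) (S : Set V) : Prop :=
  ∀ x ∈ S, ∀ y ∈ S, ¬ E x y

/-!
A greedy argument gives more than is asked: fewer than `(a + 1) * (b + 1)` vertices always admit an
`(a, b)`-decomposition. Remove directed paths with at least `b + 1` vertices as long as there are
any. After `a` removals at most `b` vertices are left, so at most `a` paths are ever removed and the
remaining vertices span no path with more than `b` vertices. Peeling off the sources of what remains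
shortens every path, so `b` rounds of peeling exhaust it, and each round removes an antichain.
With `a = ℓ` and `b = ⌈n / ℓ⌉` the bound on the number of vertices holds since `n ≤ ℓ * ⌈n / ℓ⌉`.
-/

section

open Function Set

variable {α : Type*} {p : Set α → Prop} {s t : Set α} {n : ℕ}

/-- `S` is a disjoint union of `n` sets with property `p`, such as chains or antichains. The parts
are indexed by `Fin n` and may be empty if `p` allows it, so `n` is an upper bound for the number of
nonempty parts. -/
def Partitionable (p : Set α → Prop) (n : ℕ) (S : Set α) : Prop :=
  ∃ P : Fin n → Set α, (∀ i, p (P i)) ∧ Pairwise (Disjoint on P) ∧ ⋃ i, P i = S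

theorem Partitionable.empty (hp : p ∅) : Partitionable p n ∅ :=
  ⟨fun _ ↦ ∅, fun _ ↦ hp, fun _ _ _ ↦ disjoint_bot_left, iUnion_empty⟩

theorem pairwise_disjoint_cons {P : Fin n → Set α} (hs : ∀ i, Disjoint s (P i))
    (hP : Pairwise (Disjoint on P)) :
    Pairwise (Disjoint on (Fin.cons s P : Fin (n + 1) → Set α)) := by
  intro i j hij
  cases i using Fin.cases <;> cases j using Fin.cases
  · exact absurd rfl hij
  · exact hs _
  · exact (hs _).symm
  · exact hP (ne_of_apply_ne Fin.succ hij)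

theorem Partitionable.union_left (ht : Partitionable p n t) (hs : p s) (hst : Disjoint s t) :
    Partitionable p (n + 1) (s ∪ t) := by
  obtain ⟨P, hp, hP, rfl⟩ := ht
  have hsP : ∀ i, Disjoint s (P i) := disjoint_iUnion_right.1 hst
  refine ⟨Fin.cons s P, Fin.cases hs hp, pairwise_disjoint_cons hsP hP, ?_⟩
  ext x
  simp

end

section

open Function Set

variable {V : Type*} {E : V → V → Prop} {S : Set V} {a b k : ℕ}

/-- No directed path inside `S` has more than `k` vertices. Walks with repeated vertices count as
paths here; an acyclic `E` has none. -/
def PathLengthLE (E : V → V → Prop) (k : ℕ) (S : Set V) : Prop :=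
  ∀ l : List V, l.IsChain E → (∀ x ∈ l, x ∈ S) → l.length ≤ k

/-- The sources of the subgraph induced on `S`: the layer removed in one round of peeling. -/
def sources (E : V → V → Prop) (S : Set V) : Set V :=
  {v ∈ S | ∀ u ∈ S, ¬ E u v}

theorem sources_subset : sources E S ⊆ S :=
  sep_subset S _

theorem isDagChain_empty : IsDagChain E ∅ :=
  ⟨[], List.nodup_nil, List.isChain_nil, by simp⟩

theorem isDagAntichain_empty : IsDagAntichain E ∅ :=
  fun _ h ↦ h.elim

theorem isDagAntichain_sources : IsDagAntichain E (sources E S) :=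
  fun u hu _ hv ↦ hv.2 u hu.1

theorem PathLengthLE.eq_empty (h : PathLengthLE E 0 S) : S = ∅ :=
  eq_empty_of_forall_notMem fun v hv ↦ by
    simpa using h [v] (List.isChain_singleton v) (by simpa using hv)

theorem PathLengthLE.sdiff_sources (h : PathLengthLE E (k + 1) S) :
    PathLengthLE E k (S \ sources E S) := by
  rintro (_ | ⟨v, l⟩) hl hlS
  · exact Nat.zero_le k
  · have hvlS : ∀ x ∈ v :: l, x ∈ S := fun x hx ↦ (hlS x hx).1
    obtain ⟨u, hu, huv⟩ : ∃ u ∈ S, E u v := by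
      simpa [sources, hvlS v] using (hlS v List.mem_cons_self).2
    exact Nat.le_of_succ_le_succ <|
      h (u :: v :: l) (hl.cons_cons huv) (List.forall_mem_cons.2 ⟨hu, hvlS⟩)

theorem PathLengthLE.partitionable_isDagAntichain (h : PathLengthLE E k S) :
    Partitionable (IsDagAntichain E) k S := by
  induction k generalizing S with
  | zero =>
    rw [h.eq_empty]
    exact .empty isDagAntichain_empty
  | succ k ih =>
    rw [← union_sdiff_cancel (sources_subset (E := E) (S := S))]
    exact (ih h.sdiff_sources).union_left isDagAntichain_sources disjoint_sdiff_right

theorem nodup_of_isChain_of_acyclic (hacyc : ∀ v, ¬ Relation.TransGen E v v) {l : List V}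
    (hl : l.IsChain E) : l.Nodup := by
  have hpath : l.IsChain (Relation.TransGen E) := hl.imp fun _ _ ↦ .single
  have : Std.Irrefl (Relation.TransGen E) := ⟨hacyc⟩
  exact hpath.pairwise.nodup

theorem exists_isDagChain_of_not_pathLengthLE (hacyc : ∀ v, ¬ Relation.TransGen E v v)
    (h : ¬ PathLengthLE E k S) : ∃ C ⊆ S, IsDagChain E C ∧ k < C.ncard := by
  classical
  simp only [PathLengthLE, not_forall, not_le] at h
  obtain ⟨l, hl, hlS, hk⟩ := h
  have hnodup := nodup_of_isChain_of_acyclic hacyc hl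
  refine ⟨{x | x ∈ l}, hlS, ⟨l, hnodup, hl, rfl⟩, ?_⟩
  rwa [← List.coe_toFinset, ncard_coe_finset, List.toFinset_card_of_nodup hnodup]

theorem exists_partitionable_isDagChain_pathLengthLE (hacyc : ∀ v, ¬ Relation.TransGen E v v)
    (hS : S.Finite) (hcard : S.ncard < (a + 1) * (b + 1)) :
    ∃ T ⊆ S, Partitionable (IsDagChain E) a T ∧ PathLengthLE E b (S \ T) := by
  induction a generalizing S with
  | zero =>
    refine ⟨∅, empty_subset S, .empty isDagChain_empty, ?_⟩
    rw [sdiff_empty]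
    by_contra hlong
    obtain ⟨C, hCS, -, hbC⟩ := exists_isDagChain_of_not_pathLengthLE hacyc hlong
    have := ncard_le_ncard hCS hS
    omega
  | succ a ih =>
    by_cases hshort : PathLengthLE E b S
    · exact ⟨∅, empty_subset S, .empty isDagChain_empty, by rwa [sdiff_empty]⟩
    obtain ⟨C, hCS, hC, hbC⟩ := exists_isDagChain_of_not_pathLengthLE hacyc hshort
    have hcard' : (S \ C).ncard < (a + 1) * (b + 1) := by
      have := ncard_sdiff_add_ncard_of_subset hCS hS
      linarith
    obtain ⟨T, hTS, hT, hlen⟩ := ih hS.sdiff hcard'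
    refine ⟨C ∪ T, union_subset hCS (hTS.trans sdiff_subset), ?_, by rwa [← sdiff_sdiff]⟩
    exact hT.union_left hC (disjoint_sdiff_right.mono_right hTS)

theorem lt_add_one_mul_ceilDiv_add_one (n : ℕ) {ℓ : ℕ} (hℓ : 0 < ℓ) :
    n < (ℓ + 1) * (n ⌈/⌉ ℓ + 1) := by
  have : n ≤ ℓ * (n ⌈/⌉ ℓ) := le_smul_ceilDiv hℓ
  linarith [Nat.zero_le (n ⌈/⌉ ℓ)]

theorem stmt0_general (hacyc : ∀ v, ¬ Relation.TransGen E v v) (hS : S.Finite)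
    (hcard : S.ncard < (a + 1) * (b + 1)) :
    ∃ (P : Fin a → Set V) (Q : Fin b → Set V),
      (∀ i, IsDagChain E (P i)) ∧
      (∀ j, IsDagAntichain E (Q j)) ∧
      (∀ i j, i ≠ j → Disjoint (P i) (P j)) ∧
      (∀ i j, i ≠ j → Disjoint (Q i) (Q j)) ∧
      (∀ i j, Disjoint (P i) (Q j)) ∧
      ((⋃ i, P i) ∪ (⋃ j, Q j)) = S := by
  obtain ⟨T, hTS, ⟨P, hP, hPP, rfl⟩, hlen⟩ :=
    exists_partitionable_isDagChain_pathLengthLE hacyc hS hcard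
  obtain ⟨Q, hQ, hQQ, hQS⟩ := hlen.partitionable_isDagAntichain
  have hPQ : Disjoint (⋃ i, P i) (⋃ j, Q j) := hQS ▸ disjoint_sdiff_right
  exact ⟨P, Q, hP, hQ, fun _ _ h ↦ hPP h, fun _ _ h ↦ hQQ h,
    fun i j ↦ hPQ.mono (subset_iUnion P i) (subset_iUnion Q j), by
      rw [hQS, union_sdiff_cancel hTS]⟩

end

theorem stmt0 {V : Type*} [Fintype V] (E : V → V → Prop)
    (hacyc : ∀ v : V, ¬ Relation.TransGen E v v)
    (n : ℕ) (hn : Fintype.card V = n)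
    (ℓ : ℕ) (hℓ1 : 1 ≤ ℓ) (hℓn : ℓ ≤ n) :
    ∃ (a b : ℕ) (P : Fin a → Set V) (Q : Fin b → Set V),
      a ≤ ℓ ∧ b ≤ 2 * ((n + ℓ - 1) / ℓ) ∧
      (∀ i, IsDagChain E (P i)) ∧
      (∀ j, IsDagAntichain E (Q j)) ∧
      (∀ i j, i ≠ j → Disjoint (P i) (P j)) ∧
      (∀ i j, i ≠ j → Disjoint (Q i) (Q j)) ∧
      (∀ i j, Disjoint (P i) (Q j)) ∧
      ((⋃ i, P i) ∪ (⋃ j, Q j)) = Set.univ := by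
  obtain ⟨P, Q, hPQ⟩ := stmt0_general hacyc Set.finite_univ (a := ℓ) (b := n ⌈/⌉ ℓ) <| by
    simpa [Set.ncard_univ, hn] using lt_add_one_mul_ceilDiv_add_one n hℓ1
  -- On `ℕ`, `n ⌈/⌉ ℓ` is by definition `(n + ℓ - 1) / ℓ`.
  exact ⟨ℓ, n ⌈/⌉ ℓ, P, Q, le_rfl, Nat.le_mul_of_pos_left _ two_pos, hPQ⟩
end

section
/- Let < be a strict partial order on a finite set V and let W ⊆ V be a set that is the union of q' pairwise disjoint antichains. Then W can be partitioned into q pairwise disjoint antichains Q_1, …, Q_q such that the family Q_1, …, Q_q is path-respecting, q equals the maximum number of elements of a chain contained in W, and q ≤ q'. -/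
/-!
Sort the elements `x` of `W` by the maximal size of a chain of `W` lying strictly below `x`.
Putting `x` on top of such a chain gives a chain of `W` that is larger by one, so this size
strictly increases along the order and stays below the maximal size `q` of a chain of `W`.
Its level sets are therefore `q` antichains, listed in a path-respecting order. A chain
meets every antichain at most once, so `q` is at most the size of any cover of `W` by antichains.
-/

section

variable {V ι : Type*} {r : V → V → Prop} {s t : Set V} {x y : V}

theorem chainHeight_add_one_le_of_forall_rel [Std.Irrefl r] (hts : t ⊆ s) (hx : x ∈ s)
    (htx : ∀ y ∈ t, r y x) : t.chainHeight r + 1 ≤ s.chainHeight r := by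
  have : Nonempty {C : Set V // C ⊆ t ∧ IsChain r C} :=
    ⟨∅, Set.empty_subset t, IsChain.empty⟩
  rw [t.chainHeight_eq_iSup r, ENat.iSup_add]
  refine iSup_le fun ⟨C, hCt, hC⟩ ↦ ?_
  have hxC : x ∉ C := fun h ↦ irrefl x (htx x (hCt h))
  have hinsert : IsChain r (insert x C) := hC.insert fun y hy _ ↦ .inr (htx y (hCt hy))
  rw [← Set.encard_insert_of_notMem hxC]
  exact s.encard_le_chainHeight_of_isChain _ (Set.insert_subset hx (hCt.trans hts)) hinsert

theorem encard_le_card_of_isChain_of_subset_iUnion_isAntichain {A : ι → Set V}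
    (hs : IsChain r s) (hA : ∀ i, IsAntichain r (A i)) (hsA : s ⊆ ⋃ i, A i) :
    s.encard ≤ ENat.card ι := by
  have hmem (x : s) : ∃ i, (x : V) ∈ A i := Set.mem_iUnion.1 (hsA x.2)
  choose f hf using hmem
  have hinj : Function.Injective f := fun x y hxy ↦ Subtype.ext <|
    inter_subsingleton_of_isChain_of_isAntichain hs (hA (f x)) ⟨x.2, hf x⟩ ⟨y.2, hxy ▸ hf y⟩
  exact ENat.card_le_card_of_injective hinj

theorem chainHeight_le_card_of_subset_iUnion_isAntichain {A : ι → Set V}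
    (hA : ∀ i, IsAntichain r (A i)) (hsA : s ⊆ ⋃ i, A i) : s.chainHeight r ≤ ENat.card ι :=
  iSup_le fun C ↦
    encard_le_card_of_isChain_of_subset_iUnion_isAntichain C.2.2 hA (C.2.1.trans hsA)

theorem exists_finset_isChain_card_eq_of_chainHeight_eq {q : ℕ} (h : s.chainHeight r = q) :
    ∃ C : Finset V, ↑C ⊆ s ∧ IsChain r (C : Set V) ∧ C.card = q := by
  obtain ⟨C, hCs, hcard, hC⟩ := Set.exists_isChain_of_le_chainHeight q h.ge
  lift C to Finset V using Set.finite_of_encard_eq_coe hcard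
  exact ⟨C, hCs, hC, by simpa only [Set.encard_coe_eq_coe_finsetCard, Nat.cast_inj] using hcard⟩

theorem card_le_of_isChain_of_chainHeight_eq {q : ℕ} (h : s.chainHeight r = q) {C : Finset V}
    (hCs : ↑C ⊆ s) (hC : IsChain r (C : Set V)) : C.card ≤ q := by
  have hle := s.encard_le_chainHeight_of_isChain _ hCs hC
  rwa [h, Set.encard_coe_eq_coe_finsetCard, Nat.cast_le] at hle

/-- The property that makes a family of disjoint antichains path-respecting, stated for an
arbitrary family of sets: elements related by `r` lie in sets of increasing index. -/
def IsPathRespecting [LT ι] (r : V → V → Prop) (Q : ι → Set V) : Prop :=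
  ∀ ⦃i j : ι⦄ ⦃x y : V⦄, x ∈ Q i → y ∈ Q j → r x y → i < j

theorem IsPathRespecting.isAntichain [Preorder ι] {Q : ι → Set V} (hQ : IsPathRespecting r Q)
    (i : ι) : IsAntichain r (Q i) :=
  fun _ hx _ hy _ hxy ↦ lt_irrefl i (hQ hx hy hxy)

/-- The maximal number of elements of a chain of `s` strictly below `x`, used as the rank of `x`
in `s`; it is `⊤` if these numbers are unbounded. -/
noncomputable def chainHeightBelow (r : V → V → Prop) (s : Set V) (x : V) : ℕ∞ :=
  (s ∩ {y | r y x}).chainHeight r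

theorem chainHeightBelow_add_one_le_of_rel [Std.Irrefl r] [IsTrans V r] (hx : x ∈ s)
    (hxy : r x y) : chainHeightBelow r s x + 1 ≤ chainHeightBelow r s y :=
  chainHeight_add_one_le_of_forall_rel
    (Set.inter_subset_inter_right s fun _ hz ↦ _root_.trans hz hxy) ⟨hx, hxy⟩ fun _ hz ↦ hz.2

theorem chainHeightBelow_add_one_le_chainHeight [Std.Irrefl r] (hx : x ∈ s) :
    chainHeightBelow r s x + 1 ≤ s.chainHeight r :=
  chainHeight_add_one_le_of_forall_rel Set.inter_subset_left hx fun _ hy ↦ hy.2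

/-- The `n`-th level of `s`, counted from `0`: the elements of `s` whose longest chains of `s`
strictly below them have `n` elements. The levels are the antichains `Q_i` of the partition. -/
def chainLevel (r : V → V → Prop) (s : Set V) (n : ℕ) : Set V :=
  {x ∈ s | chainHeightBelow r s x = n}

theorem disjoint_chainLevel {m n : ℕ} (hmn : m ≠ n) :
    Disjoint (chainLevel r s m) (chainLevel r s n) :=
  Set.disjoint_left.2 fun _ hm hn ↦ hmn (Nat.cast_injective (hm.2.symm.trans hn.2))

theorem isPathRespecting_chainLevel [Std.Irrefl r] [IsTrans V r] :
    IsPathRespecting r (chainLevel r s) := by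
  rintro m n x y ⟨hx, hm⟩ ⟨-, hn⟩ hxy
  have hlt := chainHeightBelow_add_one_le_of_rel hx hxy
  rw [hm, hn] at hlt
  exact_mod_cast hlt

theorem iUnion_chainLevel_of_chainHeight_eq [Std.Irrefl r] {q : ℕ} (h : s.chainHeight r = q) :
    ⋃ i : Fin q, chainLevel r s i = s := by
  refine Set.Subset.antisymm (Set.iUnion_subset fun _ ↦ Set.sep_subset s _) fun x hx ↦ ?_
  have hle : chainHeightBelow r s x + 1 ≤ q := h ▸ chainHeightBelow_add_one_le_chainHeight hx
  obtain ⟨n, hn⟩ := ENat.ne_top_iff_exists.1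
    (ne_top_of_le_ne_top (ENat.natCast_ne_top q) (le_self_add.trans hle))
  have hnq : n < q := by
    rw [← hn] at hle
    exact_mod_cast hle
  exact Set.mem_iUnion.2 ⟨⟨n, hnq⟩, hx, hn.symm⟩

end

theorem stmt3_general {V : Type*} (r : V → V → Prop) [IsStrictOrder V r]
    (W : Set V) (q' : ℕ) (A : Fin q' → Set V)
    (hAanti : ∀ i, IsAntichain r (A i))
    (hW : W ⊆ ⋃ i, A i) :
    ∃ (q : ℕ) (Q : Fin q → Set V),
      (∀ i j, i ≠ j → Disjoint (Q i) (Q j)) ∧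
      (∀ i, IsAntichain r (Q i)) ∧
      (⋃ i, Q i) = W ∧
      (∀ (i j : Fin q) (x y : V), x ∈ Q i → y ∈ Q j → r x y → i < j) ∧
      (∃ C : Finset V, ↑C ⊆ W ∧ IsChain r (C : Set V) ∧ C.card = q) ∧
      (∀ C : Finset V, ↑C ⊆ W → IsChain r (C : Set V) → C.card ≤ q) ∧
      q ≤ q' := by
  have hle : W.chainHeight r ≤ q' := by
    simpa only [ENat.card_eq_coe_fintype_card, Fintype.card_fin] using
      chainHeight_le_card_of_subset_iUnion_isAntichain hAanti hW
  obtain ⟨q, hq⟩ := ENat.ne_top_iff_exists.1 (ne_top_of_le_ne_top (ENat.natCast_ne_top q') hle)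
  exact ⟨q, fun i ↦ chainLevel r W i,
    fun i j hij ↦ disjoint_chainLevel (Fin.val_ne_of_ne hij),
    fun i ↦ isPathRespecting_chainLevel.isAntichain (i : ℕ),
    iUnion_chainLevel_of_chainHeight_eq hq.symm,
    fun i j x y hx hy hxy ↦ isPathRespecting_chainLevel hx hy hxy,
    exists_finset_isChain_card_eq_of_chainHeight_eq hq.symm,
    fun C hCW hC ↦ card_le_of_isChain_of_chainHeight_eq hq.symm hCW hC,
    Nat.cast_le.1 (hq.trans_le hle)⟩

theorem stmt3 {V : Type*} [Fintype V] [PartialOrder V]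
    (W : Set V) (q' : ℕ) (A : Fin q' → Set V)
    (hAdisj : ∀ i j, i ≠ j → Disjoint (A i) (A j))
    (hAanti : ∀ i, IsAntichain (· < ·) (A i))
    (hW : W = ⋃ i, A i) :
    ∃ (q : ℕ) (Q : Fin q → Set V),
      (∀ i j, i ≠ j → Disjoint (Q i) (Q j)) ∧
      (∀ i, IsAntichain (· < ·) (Q i)) ∧
      (⋃ i, Q i) = W ∧
      (∀ (i j : Fin q) (x y : V), x ∈ Q i → y ∈ Q j → x < y → i < j) ∧
      (∃ C : Finset V, ↑C ⊆ W ∧ IsChain (· < ·) (C : Set V) ∧ C.card = q) ∧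
      (∀ C : Finset V, ↑C ⊆ W → IsChain (· < ·) (C : Set V) → C.card ≤ q) ∧
      q ≤ q' :=
  stmt3_general (· < ·) W q' A hAanti hW.subset
end

section
/- Let < be a strict partial order on a finite set V, let φ be a topological order of (V, <), and let P_1, …, P_p be pairwise disjoint chains whose union is a set W ⊆ V. Let u, v ∈ V have at least one common ancestor in W. For each index i such that both u and v have an ancestor in P_i, let w_i denote the <-minimum of (the <-greatest ancestor of u in P_i) and (the <-greatest ancestor of v in P_i). Then among all such candidates w_i, the one with the largest φ-label is a W-restricted LCA of (u, v). -/
/-- `w` is a `W`-restricted LCA of `(u, v)`: `w ∈ W` is a common ancestor of `u` and `v`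
and no proper descendant of `w` in `W` is a common ancestor of `u` and `v`. -/
def IsRestLCA {V : Type*} [PartialOrder V] (W : Set V) (u v w : V) : Prop :=
  w ∈ W ∧ w ≤ u ∧ w ≤ v ∧ ∀ w' ∈ W, w < w' → ¬(w' ≤ u ∧ w' ≤ v)

/-!
The candidate `w i` is the greatest common ancestor of `u` and `v` lying in `P i`. A common ancestor
in `W` lies in some `P j`, hence below `w j`, so any `≤`-maximal candidate is maximal among all
common ancestors in `W`. A largest label under a strictly monotone `φ` selects such a candidate.
-/

open Set

section Order

variable {α ι : Type*}

theorem isGreatest_inter_Iic_iff [Preorder α] {s : Set α} {u a : α} :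
    IsGreatest (s ∩ Iic u) a ↔ a ∈ s ∧ a ≤ u ∧ ∀ x ∈ s, x ≤ u → x ≤ a := by
  simp only [IsGreatest, mem_upperBounds, mem_inter_iff, mem_Iic, and_imp, and_assoc]

theorem isGreatest_inter_inter_of_eq_or_eq [LE α] {s t t' : Set α} (ht : IsLowerSet t)
    (ht' : IsLowerSet t') {a b c : α} (ha : IsGreatest (s ∩ t) a) (hb : IsGreatest (s ∩ t') b)
    (hc : c = a ∨ c = b) (hca : c ≤ a) (hcb : c ≤ b) : IsGreatest (s ∩ (t ∩ t')) c := by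
  have hcs : c ∈ s := by
    rcases hc with rfl | rfl
    exacts [ha.1.1, hb.1.1]
  refine ⟨⟨hcs, ht hca ha.1.2, ht' hcb hb.1.2⟩, fun x ⟨hxs, hxt, hxt'⟩ => ?_⟩
  rcases hc with rfl | rfl
  exacts [ha.2 ⟨hxs, hxt⟩, hb.2 ⟨hxs, hxt'⟩]

theorem maximal_mem_iUnion_of_maximalFor [Preorder α] {s : ι → Set α} {I : Set ι} {g : ι → α}
    (hI : ∀ i, (s i).Nonempty → i ∈ I) (hg : ∀ i ∈ I, IsGreatest (s i) (g i)) {i₀ : ι}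
    (hi₀ : MaximalFor (· ∈ I) g i₀) : Maximal (· ∈ ⋃ i, s i) (g i₀) := by
  refine ⟨mem_iUnion_of_mem i₀ (hg i₀ hi₀.prop).1, fun x hx hle => ?_⟩
  obtain ⟨j, hj⟩ := mem_iUnion.1 hx
  have hjI : j ∈ I := hI j ⟨x, hj⟩
  have hxj : x ≤ g j := (hg j hjI).2 hj
  exact hxj.trans (hi₀.le_of_le hjI (hle.trans hxj))

end Order

theorem isRestLCA_iff_maximal {V : Type*} [PartialOrder V] {W : Set V} {u v w : V} :
    IsRestLCA W u v w ↔ Maximal (· ∈ W ∩ (Iic u ∩ Iic v)) w := by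
  simp only [IsRestLCA, maximal_iff_forall_gt, mem_inter_iff, mem_Iic, and_assoc]
  grind

theorem stmt6_general {V ι : Type*} [PartialOrder V] {P : ι → Set V} {u v : V} {I : Set ι}
    (hI : I = {i | (∃ x ∈ P i, x ≤ u) ∧ (∃ x ∈ P i, x ≤ v)}) {gu gv w : ι → V}
    (hgu : ∀ i ∈ I, gu i ∈ P i ∧ gu i ≤ u ∧ ∀ x ∈ P i, x ≤ u → x ≤ gu i)
    (hgv : ∀ i ∈ I, gv i ∈ P i ∧ gv i ≤ v ∧ ∀ x ∈ P i, x ≤ v → x ≤ gv i)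
    (hw : ∀ i ∈ I, (w i = gu i ∨ w i = gv i) ∧ w i ≤ gu i ∧ w i ≤ gv i)
    {i₀ : ι} (hi₀ : MaximalFor (· ∈ I) w i₀) : IsRestLCA (⋃ i, P i) u v (w i₀) := by
  have hgreatest : ∀ i ∈ I, IsGreatest (P i ∩ (Iic u ∩ Iic v)) (w i) := fun i hi =>
    isGreatest_inter_inter_of_eq_or_eq (isLowerSet_Iic u) (isLowerSet_Iic v)
      (isGreatest_inter_Iic_iff.2 (hgu i hi)) (isGreatest_inter_Iic_iff.2 (hgv i hi))
      (hw i hi).1 (hw i hi).2.1 (hw i hi).2.2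
  have hmem : ∀ i, (P i ∩ (Iic u ∩ Iic v)).Nonempty → i ∈ I := by
    rintro i ⟨x, hxP, hxu, hxv⟩
    exact hI ▸ ⟨⟨x, hxP, hxu⟩, ⟨x, hxP, hxv⟩⟩
  rw [isRestLCA_iff_maximal, iUnion_inter]
  exact maximal_mem_iUnion_of_maximalFor hmem hgreatest hi₀

theorem stmt6 {V : Type*} [Fintype V] [PartialOrder V]
    (p : ℕ) (P : Fin p → Set V)
    (hPdisj : ∀ i j, i ≠ j → Disjoint (P i) (P j))
    (hPchain : ∀ i, IsChain (· < ·) (P i))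
    (W : Set V) (hW : W = ⋃ i, P i)
    (φ : V → ℕ) (hφinj : Function.Injective φ)
    (hφtopo : ∀ x y : V, x < y → φ x < φ y)
    (u v : V) (hca : ∃ x ∈ W, x ≤ u ∧ x ≤ v)
    -- `I` is the set of indices `i` such that both `u` and `v` have an ancestor in `P i`
    (I : Set (Fin p)) (hI : I = {i | (∃ x ∈ P i, x ≤ u) ∧ (∃ x ∈ P i, x ≤ v)})
    -- `gu i` is the `<`-greatest ancestor of `u` in `P i`, `gv i` that of `v`
    (gu gv : Fin p → V)
    (hgu : ∀ i ∈ I, gu i ∈ P i ∧ gu i ≤ u ∧ ∀ x ∈ P i, x ≤ u → x ≤ gu i)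
    (hgv : ∀ i ∈ I, gv i ∈ P i ∧ gv i ≤ v ∧ ∀ x ∈ P i, x ≤ v → x ≤ gv i)
    -- `w i` is the `<`-minimum of `gu i` and `gv i`
    (w : Fin p → V)
    (hw : ∀ i ∈ I, (w i = gu i ∨ w i = gv i) ∧ w i ≤ gu i ∧ w i ≤ gv i)
    -- `i₀` indexes the candidate with the largest `φ`-label
    (i₀ : Fin p) (hi₀ : i₀ ∈ I) (hmax : ∀ i ∈ I, φ (w i) ≤ φ (w i₀)) :
    IsRestLCA W u v (w i₀) := by
  subst hW
  exact stmt6_general hI hgu hgv hw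
    (.of_strictMonoOn_comp (fun x _ y _ => hφtopo x y) ⟨hi₀, fun i hi _ => hmax i hi⟩)
end

section
/- Let < be a strict partial order on a finite set V and let P_1, …, P_p be pairwise disjoint chains whose union is a set W ⊆ V. Let u, v ∈ V and suppose w is a W-restricted LCA of (u, v). Then w belongs to some chain P_i, and w is the <-greatest common ancestor of u and v in P_i; equivalently, w equals the <-minimum of (the <-greatest ancestor of u in P_i) and (the <-greatest ancestor of v in P_i). -/
/-! Inside a chain any two common ancestors of `u` and `v` are comparable, so a maximal one is
greatest. The smaller of the greatest ancestors of `u` and of `v` lies below both `u` and `v`, so it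
is that greatest common ancestor. -/

open Set

section Chain

variable {α : Type*} {C A B : Set α} {a b c : α}

theorem isGreatest_of_maximal_of_isChain [Preorder α] (hC : IsChain (· ≤ ·) C)
    (hc : Maximal (· ∈ C) c) : IsGreatest C c :=
  ⟨hc.prop, hC.directedOn.is_top_of_is_max hc.prop fun _ hx ↦ hc.le_of_ge hx⟩

theorem isLeast_pair_of_isGreatest_inter [PartialOrder α] (hC : IsChain (· ≤ ·) C)
    (hA : IsLowerSet A) (hB : IsLowerSet B) (ha : IsGreatest (C ∩ A) a)
    (hb : IsGreatest (C ∩ B) b) (hc : IsGreatest (C ∩ (A ∩ B)) c) : IsLeast {a, b} c := by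
  obtain ⟨⟨haC, haA⟩, ha_max⟩ := ha
  obtain ⟨⟨hbC, hbB⟩, hb_max⟩ := hb
  obtain ⟨⟨hcC, hcA, hcB⟩, hc_max⟩ := hc
  have hca : c ≤ a := ha_max ⟨hcC, hcA⟩
  have hcb : c ≤ b := hb_max ⟨hcC, hcB⟩
  refine ⟨?_, by simp [hca, hcb]⟩
  rcases hC.total haC hbC with hab | hba
  · have hac : a ≤ c := hc_max ⟨haC, haA, hB hab hbB⟩
    exact Or.inl (hca.antisymm hac)
  · have hbc : b ≤ c := hc_max ⟨hbC, hA hba haA, hbB⟩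
    exact Or.inr (hcb.antisymm hbc)

end Chain

namespace IsRestLCA

variable {V : Type*} [PartialOrder V] {W C : Set V} {u v w : V}

theorem mono (hw : IsRestLCA W u v w) (hCW : C ⊆ W) (hwC : w ∈ C) : IsRestLCA C u v w :=
  ⟨hwC, hw.2.1, hw.2.2.1, fun x hx ↦ hw.2.2.2 x (hCW hx)⟩

theorem maximal (hw : IsRestLCA W u v w) : Maximal (· ∈ W ∩ (Iic u ∩ Iic v)) w := by
  obtain ⟨hwW, hwu, hwv, hw_max⟩ := hw
  exact maximal_iff_forall_gt.2
    ⟨⟨hwW, hwu, hwv⟩, fun x hwx hx ↦ hw_max x hx.1 hwx hx.2⟩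

theorem isGreatest_of_isChain (hw : IsRestLCA C u v w) (hC : IsChain (· ≤ ·) C) :
    IsGreatest (C ∩ (Iic u ∩ Iic v)) w :=
  isGreatest_of_maximal_of_isChain (hC.mono inter_subset_left) hw.maximal

end IsRestLCA

theorem stmt7_general {V : Type*} [PartialOrder V] {ι : Sort*} {P : ι → Set V}
    (hP : ∀ i, IsChain (· ≤ ·) (P i)) {u v w : V} (hw : IsRestLCA (⋃ i, P i) u v w) :
    ∃ i, IsGreatest (P i ∩ (Iic u ∩ Iic v)) w ∧
      ∀ gu gv, IsGreatest (P i ∩ Iic u) gu → IsGreatest (P i ∩ Iic v) gv →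
        IsLeast {gu, gv} w := by
  obtain ⟨i, hwi⟩ := mem_iUnion.1 hw.1
  have hw_greatest : IsGreatest (P i ∩ (Iic u ∩ Iic v)) w :=
    (hw.mono (subset_iUnion P i) hwi).isGreatest_of_isChain (hP i)
  exact ⟨i, hw_greatest, fun gu gv hgu hgv ↦ isLeast_pair_of_isGreatest_inter (hP i)
    (isLowerSet_Iic u) (isLowerSet_Iic v) hgu hgv hw_greatest⟩

theorem stmt7 {V : Type*} [Fintype V] [PartialOrder V]
    (p : ℕ) (P : Fin p → Set V)
    (hPdisj : ∀ i j, i ≠ j → Disjoint (P i) (P j))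
    (hPchain : ∀ i, IsChain (· < ·) (P i))
    (W : Set V) (hW : W = ⋃ i, P i)
    (u v w : V) (hw : IsRestLCA W u v w) :
    ∃ i : Fin p, w ∈ P i ∧
      -- `w` is the `<`-greatest common ancestor of `u` and `v` in `P i`
      (∀ x ∈ P i, x ≤ u → x ≤ v → x ≤ w) ∧
      -- equivalently, `w` is the `<`-minimum of the greatest ancestor of `u` in `P i`
      -- and the greatest ancestor of `v` in `P i`
      (∀ gu gv : V,
        (gu ∈ P i ∧ gu ≤ u ∧ ∀ x ∈ P i, x ≤ u → x ≤ gu) →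
        (gv ∈ P i ∧ gv ≤ v ∧ ∀ x ∈ P i, x ≤ v → x ≤ gv) →
        ((w = gu ∨ w = gv) ∧ w ≤ gu ∧ w ≤ gv)) := by
  obtain ⟨i, hw_greatest, hw_least⟩ :=
    stmt7_general (fun i ↦ (hPchain i).mono_rel fun _ _ ↦ le_of_lt) (hW ▸ hw)
  exact ⟨i, hw_greatest.1.1, fun x hx hxu hxv ↦ hw_greatest.2 ⟨hx, hxu, hxv⟩,
    by simpa [IsGreatest, IsLeast, mem_upperBounds, and_assoc] using hw_least⟩
end

section
/- Let < be a strict partial order on a finite set V whose elements are partitioned into two sets W_P and W_Q, where W_P is a union of pairwise disjoint chains and W_Q is the union of a path-respecting family Q_1, …, Q_q of pairwise disjoint antichains. Let φ be a Q-compact topological order of (V, <). Let u, v ∈ V have at least one common ancestor in V. Define candidates as follows: if u and v have a common ancestor in W_P, let w_P be the common ancestor of u and v in W_P with the largest φ-label; if u and v have a common ancestor in W_Q, let i be the largest index such that Q_i contains a common ancestor of u and v and let w_Q be any common ancestor of u and v in Q_i. Then at least one candidate is defined, and among the defined candidates, the one with the larger φ-label is an LCA of (u, v) in (V, <). -/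
/-- `w` is an LCA of `(u, v)` in `(V, <)`: `w` is a common ancestor of `u` and `v`
and no proper descendant of `w` is a common ancestor of `u` and `v`. -/
def IsLCA {V : Type*} [PartialOrder V] (u v w : V) : Prop :=
  w ≤ u ∧ w ≤ v ∧ ∀ w' : V, w < w' → ¬(w' ≤ u ∧ w' ≤ v)

/- Write `wP` and `wQ ∈ Q i` for the two candidates. A common ancestor `x` in some block with a
larger label than `wQ` must lie in `Q i`: its block has index at most `i`, and the blocks are
labelled in the order of their indices. So if `φ wQ ≤ φ y` and `y < x`, then `y` is squeezed into
`Q i` by compactness, and `y < x` contradicts that `Q i` is an antichain. For `y := wP` and for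
`y := wQ` this rules out common ancestors `x > y` in the blocks; outside the blocks, the maximality
of the label of `wP` does. -/

section

variable {V ι α : Type*}

/-- `Q`-compact topological orders: injective strictly monotone labelings `φ` under which every
block `Q i` is consecutive and the blocks appear in the order of their indices. Consecutiveness is
expressed by closure of `Q i` under betweenness of labels, so gaps in the range of `φ` are
allowed. -/
structure IsBlockCompactOrder [Preorder V] [Preorder ι] [Preorder α]
    (Q : ι → Set V) (φ : V → α) : Prop where
  injective : Function.Injective φ
  strictMono : StrictMono φ
  mem_of_lt_of_lt : ∀ ⦃i x y z⦄, x ∈ Q i → y ∈ Q i → φ x < φ z → φ z < φ y → z ∈ Q i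
  lt_of_lt : ∀ ⦃i j⦄, i < j → ∀ x ∈ Q i, ∀ y ∈ Q j, φ x < φ y

/-- The candidate `w_P`: a common ancestor `w` of `u` and `v` in `W` whose label is largest among
all of these. -/
def IsMaxLabelCandidate [LE V] [LE α] (W : Set V) (φ : V → α) (u v w : V) : Prop :=
  w ∈ W ∧ w ≤ u ∧ w ≤ v ∧ ∀ x ∈ W, x ≤ u → x ≤ v → φ x ≤ φ w

/-- The candidate `w_Q`: any common ancestor `w` of `u` and `v` in `Q i`, where `i` is the largest
index of a block that contains a common ancestor. -/
def IsMaxIndexCandidate [LE V] [LE ι] (Q : ι → Set V) (u v w : V) (i : ι) : Prop :=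
  w ∈ Q i ∧ w ≤ u ∧ w ≤ v ∧ ∀ j, (∃ x ∈ Q j, x ≤ u ∧ x ≤ v) → j ≤ i

theorem isLCA_of_union_eq_univ [PartialOrder V] {A B : Set V} (hAB : A ∪ B = Set.univ) {u v w : V}
    (hwu : w ≤ u) (hwv : w ≤ v) (hA : ∀ x ∈ A, x ≤ u → x ≤ v → ¬w < x)
    (hB : ∀ x ∈ B, x ≤ u → x ≤ v → ¬w < x) : IsLCA u v w :=
  ⟨hwu, hwv, fun x hwx ⟨hxu, hxv⟩ ↦ (Set.eq_univ_iff_forall.mp hAB x).elim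
    (fun hxA ↦ hA x hxA hxu hxv hwx) (fun hxB ↦ hB x hxB hxu hxv hwx)⟩

theorem IsBlockCompactOrder.mem_of_mem_Icc [Preorder V] [Preorder ι] [PartialOrder α]
    {Q : ι → Set V} {φ : V → α} (hφ : IsBlockCompactOrder Q φ) {i : ι} {x y z : V}
    (hx : x ∈ Q i) (hy : y ∈ Q i) (hz : φ z ∈ Set.Icc (φ x) (φ y)) : z ∈ Q i := by
  rcases hz.1.eq_or_lt with hxz | hxz
  · exact hφ.injective hxz ▸ hx
  rcases hz.2.eq_or_lt with hzy | hzy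
  · exact hφ.injective hzy ▸ hy
  exact hφ.mem_of_lt_of_lt hx hy hxz hzy

theorem IsMaxLabelCandidate.not_lt_of_le [Preorder V] [Preorder α] {W : Set V} {φ : V → α}
    {u v w x y : V} (hw : IsMaxLabelCandidate W φ u v w) (hφ : StrictMono φ) (hwy : φ w ≤ φ y)
    (hxW : x ∈ W) (hxu : x ≤ u) (hxv : x ≤ v) : ¬y < x := by
  obtain ⟨-, -, -, hmax⟩ := hw
  exact fun hyx ↦ ((hmax x hxW hxu hxv).trans hwy).not_gt (hφ hyx)

theorem IsMaxIndexCandidate.not_lt_of_le [Preorder V] [PartialOrder ι] [PartialOrder α]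
    {Q : ι → Set V} {φ : V → α} {u v w x y : V} {i : ι} (hw : IsMaxIndexCandidate Q u v w i)
    (hQ : ∀ i, IsAntichain (· < ·) (Q i)) (hφ : IsBlockCompactOrder Q φ) (hwy : φ w ≤ φ y)
    (hxQ : x ∈ ⋃ j, Q j) (hxu : x ≤ u) (hxv : x ≤ v) : ¬y < x := by
  intro hyx
  obtain ⟨hwi, -, -, hmax⟩ := hw
  obtain ⟨j, hxj⟩ := Set.mem_iUnion.mp hxQ
  have hφyx : φ y < φ x := hφ.strictMono hyx
  have hji : j = i := (hmax j ⟨x, hxj, hxu, hxv⟩).eq_of_not_lt fun hlt ↦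
    (hwy.trans_lt hφyx).not_gt (hφ.lt_of_lt hlt x hxj w hwi)
  subst hji
  have hyj : y ∈ Q j := hφ.mem_of_mem_Icc hwi hxj ⟨hwy, hφyx.le⟩
  exact hQ j hyj hxj hyx.ne hyx

theorem IsMaxLabelCandidate.isLCA [PartialOrder V] [Preorder α] {W B : Set V} {φ : V → α}
    {u v w : V} (hw : IsMaxLabelCandidate W φ u v w) (hWB : W ∪ B = Set.univ) (hφ : StrictMono φ)
    (hB : ∀ x ∈ B, x ≤ u → x ≤ v → ¬w < x) : IsLCA u v w :=
  isLCA_of_union_eq_univ hWB hw.2.1 hw.2.2.1 (fun _ ↦ hw.not_lt_of_le hφ le_rfl) hB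

theorem IsMaxIndexCandidate.isLCA [PartialOrder V] [PartialOrder ι] [PartialOrder α]
    {A : Set V} {Q : ι → Set V} {φ : V → α} {u v w : V} {i : ι}
    (hw : IsMaxIndexCandidate Q u v w i) (hAQ : A ∪ ⋃ i, Q i = Set.univ)
    (hQ : ∀ i, IsAntichain (· < ·) (Q i)) (hφ : IsBlockCompactOrder Q φ)
    (hA : ∀ x ∈ A, x ≤ u → x ≤ v → ¬w < x) : IsLCA u v w :=
  isLCA_of_union_eq_univ hAQ hw.2.1 hw.2.2.1 hA fun _ ↦ hw.not_lt_of_le hQ hφ le_rfl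

theorem stmt9_general [PartialOrder V] [PartialOrder ι] [PartialOrder α]
    {W : Set V} {Q : ι → Set V} {φ : V → α} (hcover : W ∪ ⋃ i, Q i = Set.univ)
    (hQ : ∀ i, IsAntichain (· < ·) (Q i)) (hφ : IsBlockCompactOrder Q φ)
    {u v : V} (hca : ∃ w, w ≤ u ∧ w ≤ v) :
    ((∃ w ∈ W, w ≤ u ∧ w ≤ v) ∨ ∃ w ∈ ⋃ i, Q i, w ≤ u ∧ w ≤ v) ∧
    (∀ wP, IsMaxLabelCandidate W φ u v wP →
      (¬∃ w ∈ ⋃ i, Q i, w ≤ u ∧ w ≤ v) → IsLCA u v wP) ∧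
    (∀ wQ i, IsMaxIndexCandidate Q u v wQ i →
      (¬∃ w ∈ W, w ≤ u ∧ w ≤ v) → IsLCA u v wQ) ∧
    (∀ wP wQ i, IsMaxLabelCandidate W φ u v wP → IsMaxIndexCandidate Q u v wQ i →
      (φ wQ ≤ φ wP → IsLCA u v wP) ∧ (φ wP ≤ φ wQ → IsLCA u v wQ)) := by
  refine ⟨?_, fun wP hwP hnoQ ↦ ?_, fun wQ i hwQ hnoW ↦ ?_, fun wP wQ i hwP hwQ ↦ ⟨fun hle ↦ ?_,
    fun hle ↦ ?_⟩⟩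
  · obtain ⟨w, hw⟩ := hca
    exact (Set.eq_univ_iff_forall.mp hcover w).imp (⟨w, ·, hw⟩) (⟨w, ·, hw⟩)
  · exact hwP.isLCA hcover hφ.strictMono fun x hx hxu hxv ↦ (hnoQ ⟨x, hx, hxu, hxv⟩).elim
  · exact hwQ.isLCA hcover hQ hφ fun x hx hxu hxv ↦ (hnoW ⟨x, hx, hxu, hxv⟩).elim
  · exact hwP.isLCA hcover hφ.strictMono fun _ ↦ hwQ.not_lt_of_le hQ hφ hle
  · exact hwQ.isLCA hcover hQ hφ fun _ ↦ hwP.not_lt_of_le hφ.strictMono hle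

end

theorem stmt9 {V : Type*} [Fintype V] [PartialOrder V]
    (WP WQ : Set V) (hpart : WP ∪ WQ = Set.univ) (hdisjPQ : Disjoint WP WQ)
    -- `WP` is the union of a family of pairwise disjoint chains
    (p : ℕ) (P : Fin p → Set V)
    (hPdisj : ∀ i j, i ≠ j → Disjoint (P i) (P j))
    (hPchain : ∀ i, IsChain (· < ·) (P i))
    (hPU : (⋃ i, P i) = WP)
    -- `WQ` is the union of a path-respecting family of pairwise disjoint antichains
    (q : ℕ) (Q : Fin q → Set V)
    (hQdisj : ∀ i j, i ≠ j → Disjoint (Q i) (Q j))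
    (hQanti : ∀ i, IsAntichain (· < ·) (Q i))
    (hQpr : ∀ (i j : Fin q) (x y : V), x ∈ Q i → y ∈ Q j → x < y → i < j)
    (hQU : (⋃ i, Q i) = WQ)
    -- `φ` is a `Q`-compact topological order
    (φ : V → ℕ) (hφinj : Function.Injective φ)
    (hφtopo : ∀ x y : V, x < y → φ x < φ y)
    (hφcomp : ∀ (i : Fin q) (x y z : V), x ∈ Q i → y ∈ Q i → z ∉ Q i →
      ¬(φ x < φ z ∧ φ z < φ y))
    (hφord : ∀ i j : Fin q, i < j → ∀ x ∈ Q i, ∀ y ∈ Q j, φ x < φ y)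
    (u v : V) (hca : ∃ w : V, w ≤ u ∧ w ≤ v) :
    -- at least one candidate is defined
    ((∃ w ∈ WP, w ≤ u ∧ w ≤ v) ∨ (∃ w ∈ WQ, w ≤ u ∧ w ≤ v)) ∧
    -- if only the P-candidate is defined, it is an LCA
    (∀ wP : V,
      (wP ∈ WP ∧ wP ≤ u ∧ wP ≤ v ∧ ∀ w' ∈ WP, w' ≤ u → w' ≤ v → φ w' ≤ φ wP) →
      ¬(∃ w ∈ WQ, w ≤ u ∧ w ≤ v) →
      IsLCA u v wP) ∧
    -- if only the Q-candidate is defined, it is an LCA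
    (∀ (wQ : V) (i : Fin q),
      (wQ ∈ Q i ∧ wQ ≤ u ∧ wQ ≤ v ∧ ∀ j : Fin q, (∃ x ∈ Q j, x ≤ u ∧ x ≤ v) → j ≤ i) →
      ¬(∃ w ∈ WP, w ≤ u ∧ w ≤ v) →
      IsLCA u v wQ) ∧
    -- if both candidates are defined, the one with the larger φ-label is an LCA
    (∀ (wP wQ : V) (i : Fin q),
      (wP ∈ WP ∧ wP ≤ u ∧ wP ≤ v ∧ ∀ w' ∈ WP, w' ≤ u → w' ≤ v → φ w' ≤ φ wP) →
      (wQ ∈ Q i ∧ wQ ≤ u ∧ wQ ≤ v ∧ ∀ j : Fin q, (∃ x ∈ Q j, x ≤ u ∧ x ≤ v) → j ≤ i) →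
      (φ wQ ≤ φ wP → IsLCA u v wP) ∧ (φ wP ≤ φ wQ → IsLCA u v wQ)) := by
  subst hQU
  exact stmt9_general hpart hQanti ⟨hφinj, hφtopo,
    fun i x y z hx hy hxz hzy ↦ by_contra (hφcomp i x y z hx hy · ⟨hxz, hzy⟩), hφord⟩ hca
end
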